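/- arXiv:2406.12332 — 3 statements merged into one kernel-verified Lean document; each statement's English description precedes it below -/
import Mathlib

section
/- Let n = 2N-1 be odd, q = exp(2πij/(3(2N-1))) with gcd(j, 6N-3) = 1, and ω = e^{πi/3} with ω^2 = q^{2N-1}. Then ω^2·Σ_{k=1}^{N-1} q^k/(1-q^{6k}) + Σ_{k=1}^{N-1} q^{2k}/(1-q^{6k}) - Σ_{k=1}^{N} 1/(1-q^{3k-2}) = -(N/3)(1+ω). -/
open Finset Complex Real

/-! Put `n = 2N - 1` and `ζ = q ^ n`, a primitive cube root of unity. Expanding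
`(1 - ζ) / (1 - x) = ∑_{s < n} x ^ s` for `x ^ n = ζ` and exchanging sums, the last sum times
`1 - ζ` becomes `N + ∑_k (q ^ (2k) + ζ q ^ k) / (1 + q ^ (3k))`, with `1 ≤ k < N`. The claim is
thereby reduced to the vanishing of a sum over `1 ≤ k < N` whose `k`-th term is `g k - g (2k)`,
where `g k = (q ^ (2k) - ζ² q ^ k) / (1 - q ^ (3k))`. Since `g (n - k) = g k`, and doubling permutes
the nonzero residues modulo `n` up to sign, `∑ g k = ∑ g (2k)`. -/

section Reindexing

variable {A : Type*} [AddCommMonoid A]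

lemma sum_Icc_two_mul_of_reflect {g : ℕ → A} {m : ℕ}
    (hg : ∀ k ≤ 2 * m + 1, g (2 * m + 1 - k) = g k) :
    ∑ k ∈ Icc 1 m, g (2 * k) = ∑ k ∈ Icc 1 m, g k := by
  refine sum_nbij' (fun k => if 2 * k ≤ m then 2 * k else 2 * m + 1 - 2 * k)
    (fun k => if k % 2 = 0 then k / 2 else (2 * m + 1 - k) / 2) ?_ ?_ ?_ ?_ fun k hk => ?_
  any_goals intro k hk; simp only [mem_Icc] at hk ⊢; split_ifs <;> omega
  rw [mem_Icc] at hk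
  split_ifs
  · rfl
  · exact (hg (2 * k) (by omega)).symm

lemma sum_range_two_mul_add_one (f : ℕ → A) (m : ℕ) :
    ∑ s ∈ range (2 * m + 1), f s =
      f 0 + ∑ k ∈ Icc 1 m, (f (2 * k) + f (2 * m + 1 - 2 * k)) := by
  have split_parity : ∑ s ∈ range (2 * m + 1), f s =
      f 0 + ∑ k ∈ range m, (f (2 * (k + 1)) + f (2 * k + 1)) := by
    induction m with
    | zero => simp
    | succ m ih =>
      rw [show 2 * (m + 1) + 1 = 2 * m + 1 + 1 + 1 by ring, sum_range_succ, sum_range_succ, ih,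
        sum_range_succ, mul_add_one]
      abel
  have reflect_odd : ∑ k ∈ Icc 1 m, f (2 * m + 1 - 2 * k) = ∑ k ∈ range m, f (2 * k + 1) := by
    refine sum_nbij' (m - ·) (m - ·) ?_ ?_ ?_ ?_ fun k hk => ?_
    any_goals intro k hk; simp only [mem_Icc, mem_range] at hk ⊢; omega
    rw [mem_Icc] at hk
    congr 1
    omega
  have shift_even : ∑ k ∈ Icc 1 m, f (2 * k) = ∑ k ∈ range m, f (2 * (k + 1)) := by
    rw [← Finset.Ico_add_one_right_eq_Icc, sum_Ico_eq_sum_range, Nat.add_sub_cancel]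
    exact sum_congr rfl fun k _ => by rw [add_comm 1 k]
  rw [split_parity, sum_add_distrib, sum_add_distrib, reflect_odd, shift_even]

end Reindexing

section RootsOfUnity

variable {K : Type*} [Field K]

lemma geom_sum_sq_of_pow_odd_eq_one {y : K} {m : ℕ} (hy : y ^ (2 * m + 1) = 1) (hy1 : y ≠ 1) :
    ∑ t ∈ range (m + 1), (y ^ 2) ^ t = 1 / (1 + y) := by
  refine eq_one_div_of_mul_eq_one_left (mul_right_cancel₀ (sub_ne_zero.mpr hy1) ?_)
  have geom := geom_sum_mul (y ^ 2) (m + 1)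
  have wrap : (y ^ 2) ^ (m + 1) = y := by
    rw [← pow_mul, show 2 * (m + 1) = 2 * m + 1 + 1 by ring, pow_succ, hy, one_mul]
  linear_combination geom + wrap

lemma geom_sum_inv_sq_of_pow_odd_eq_one {y : K} {m : ℕ} (hy : y ^ (2 * m + 1) = 1) (hy1 : y ≠ 1) :
    ∑ t ∈ range (m + 1), (y⁻¹ ^ 2) ^ t = y / (1 + y) := by
  have hy0 : y ≠ 0 := (pow_ne_zero_iff (by omega)).mp (hy ▸ one_ne_zero)
  rw [geom_sum_sq_of_pow_odd_eq_one (by rw [inv_pow, hy, inv_one]) (inv_ne_one.mpr hy1),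
    ← mul_div_mul_left _ _ hy0, mul_one, mul_add, mul_one, mul_inv_cancel₀ hy0, add_comm y]

lemma one_sub_pow_mul_sum_one_div {q : K} {n : ℕ} (hq : q ^ (3 * n) = 1) (hζ : q ^ n ≠ 1)
    (m : ℕ) :
    (1 - q ^ n) * ∑ t ∈ range m, 1 / (1 - q ^ (3 * t + 1)) =
      ∑ s ∈ range n, q ^ s * ∑ t ∈ range m, (q ^ (3 * s)) ^ t := by
  have expand (t : ℕ) :
      (1 - q ^ n) * (1 / (1 - q ^ (3 * t + 1))) = ∑ s ∈ range n, q ^ s * (q ^ (3 * s)) ^ t := by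
    have hx : (q ^ (3 * t + 1)) ^ n = q ^ n := by
      rw [← pow_mul, show (3 * t + 1) * n = 3 * n * t + n by ring, pow_add, pow_mul, hq, one_pow,
        one_mul]
    have hx1 : q ^ (3 * t + 1) ≠ 1 := fun h => hζ (by rw [← hx, h, one_pow])
    calc (1 - q ^ n) * (1 / (1 - q ^ (3 * t + 1)))
        = ∑ s ∈ range n, (q ^ (3 * t + 1)) ^ s := by
          rw [mul_one_div, div_eq_iff (sub_ne_zero.mpr hx1.symm), geom_sum_mul_neg, hx]
      _ = ∑ s ∈ range n, q ^ s * (q ^ (3 * s)) ^ t := sum_congr rfl fun s _ => by ring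
  simp only [mul_sum, expand]
  exact sum_comm

/-- The function `g k = (q ^ (2k) - ζ² q ^ k) / (1 - q ^ (3k))`, where `ζ = q ^ n`. For
`q ^ (3n) = 1` it is invariant under `k ↦ n - k`, and its differences `g k - g (2k)` compare the
sums with denominators `1 - q ^ (6k)` to those with denominators `1 + q ^ (3k)`. -/
def reflectTerm (q : K) (n k : ℕ) : K :=
  (q ^ (2 * k) - q ^ (2 * n + k)) / (1 - q ^ (3 * k))

lemma reflectTerm_sub {q : K} {n k : ℕ} (hq : q ^ (3 * n) = 1) (hn : n ≠ 0) (hk : k ≤ n) :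
    reflectTerm q n (n - k) = reflectTerm q n k := by
  obtain ⟨l, rfl⟩ := Nat.exists_eq_add_of_le hk
  have hq0 : q ≠ 0 := (pow_ne_zero_iff (by omega)).mp (hq ▸ one_ne_zero)
  have num : q ^ (2 * l) - q ^ (2 * (k + l) + l) =
      -q ^ (3 * l) * (q ^ (2 * k) - q ^ (2 * (k + l) + k)) := by
    linear_combination (-q ^ (2 * l)) * hq
  have den : 1 - q ^ (3 * l) = -q ^ (3 * l) * (1 - q ^ (3 * k)) := by
    linear_combination -hq
  rw [reflectTerm, reflectTerm, Nat.add_sub_cancel_left, num, den,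
    mul_div_mul_left _ _ (neg_ne_zero.mpr (pow_ne_zero _ hq0))]

lemma sum_reflectTerm_two_mul {q : K} {m : ℕ} (hq : q ^ (3 * (2 * m + 1)) = 1) :
    ∑ k ∈ Icc 1 m, reflectTerm q (2 * m + 1) (2 * k) =
      ∑ k ∈ Icc 1 m, reflectTerm q (2 * m + 1) k :=
  sum_Icc_two_mul_of_reflect fun _ hk => reflectTerm_sub hq (by omega) hk

lemma reflectTerm_sub_reflectTerm_two_mul {q : K} {n k : ℕ}
    (hζ : 1 + q ^ n + (q ^ n) ^ 2 = 0) (hk : q ^ (6 * k) ≠ 1) :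
    reflectTerm q n k - reflectTerm q n (2 * k) =
      (1 - q ^ n) * ((q ^ n * q ^ k + q ^ (2 * k)) / (1 - q ^ (6 * k))) -
        (q ^ (2 * k) + q ^ n * q ^ k) / (1 + q ^ (3 * k)) := by
  have factor : 1 - q ^ (6 * k) = (1 - q ^ (3 * k)) * (1 + q ^ (3 * k)) := by ring
  have hprod : (1 - q ^ (3 * k)) * (1 + q ^ (3 * k)) ≠ 0 := factor ▸ sub_ne_zero.mpr hk.symm
  have hminus : 1 - q ^ (3 * k) ≠ 0 := left_ne_zero_of_mul hprod
  have hplus : 1 + q ^ (3 * k) ≠ 0 := right_ne_zero_of_mul hprod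
  rw [reflectTerm, reflectTerm, show 3 * (2 * k) = 6 * k by ring, factor]
  field_simp
  simp only [pow_add, pow_mul'] at hζ ⊢
  linear_combination ((q ^ k) ^ 2 - (q ^ k) ^ 4) * hζ

variable {m : ℕ} {q : K}

lemma one_sub_pow_mul_sum_one_div_of_isPrimitiveRoot (hq : IsPrimitiveRoot q (3 * (2 * m + 1))) :
    (1 - q ^ (2 * m + 1)) * ∑ t ∈ range (m + 1), 1 / (1 - q ^ (3 * t + 1)) =
      (m + 1) +
        ∑ k ∈ Icc 1 m, (q ^ (2 * k) + q ^ (2 * m + 1) * q ^ k) / (1 + q ^ (3 * k)) := by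
  have hζ : q ^ (2 * m + 1) ≠ 1 := hq.pow_ne_one_of_pos_of_lt (by omega) (by omega)
  rw [one_sub_pow_mul_sum_one_div hq.pow_eq_one hζ, sum_range_two_mul_add_one]
  congr 1
  · simp
  refine sum_congr rfl fun k hk => ?_
  rw [mem_Icc] at hk
  have hy1 : q ^ (3 * k) ≠ 1 := hq.pow_ne_one_of_pos_of_lt (by omega) (by omega)
  have hy : (q ^ (3 * k)) ^ (2 * m + 1) = 1 := by
    rw [← pow_mul, mul_right_comm, pow_mul, hq.pow_eq_one, one_pow]
  have even_base : q ^ (3 * (2 * k)) = (q ^ (3 * k)) ^ 2 := by ring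
  have odd_base : q ^ (3 * (2 * m + 1 - 2 * k)) = (q ^ (3 * k))⁻¹ ^ 2 := by
    rw [Nat.mul_sub, pow_sub₀ q (hq.ne_zero (by omega)) (by omega), hq.pow_eq_one, one_mul,
      even_base, inv_pow]
  have odd_numerator : q ^ (2 * m + 1 - 2 * k) * q ^ (3 * k) = q ^ (2 * m + 1) * q ^ k := by
    rw [← pow_add, ← pow_add]
    congr 1
    omega
  rw [even_base, odd_base, geom_sum_sq_of_pow_odd_eq_one hy hy1,
    geom_sum_inv_sq_of_pow_odd_eq_one hy hy1, mul_one_div, ← mul_div_assoc, odd_numerator, add_div]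

lemma one_sub_pow_mul_sum_div_of_isPrimitiveRoot (hq : IsPrimitiveRoot q (3 * (2 * m + 1))) :
    (1 - q ^ (2 * m + 1)) *
        ∑ k ∈ Icc 1 m, (q ^ (2 * m + 1) * q ^ k + q ^ (2 * k)) / (1 - q ^ (6 * k)) =
      ∑ k ∈ Icc 1 m, (q ^ (2 * k) + q ^ (2 * m + 1) * q ^ k) / (1 + q ^ (3 * k)) := by
  have cube_root : IsPrimitiveRoot (q ^ (2 * m + 1)) 3 := hq.pow (by omega) (mul_comm _ _)
  have hζ : 1 + q ^ (2 * m + 1) + (q ^ (2 * m + 1)) ^ 2 = 0 := by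
    simpa [sum_range_succ] using cube_root.geom_sum_eq_zero (by norm_num)
  rw [← sub_eq_zero, mul_sum, ← sum_sub_distrib]
  calc _ = ∑ k ∈ Icc 1 m, (reflectTerm q (2 * m + 1) k - reflectTerm q (2 * m + 1) (2 * k)) := by
        refine sum_congr rfl fun k hk => ?_
        rw [mem_Icc] at hk
        exact (reflectTerm_sub_reflectTerm_two_mul hζ
          (hq.pow_ne_one_of_pos_of_lt (by omega) (by omega))).symm
    _ = 0 := by rw [sum_sub_distrib, sum_reflectTerm_two_mul hq.pow_eq_one, sub_self]

theorem odd_case_lemma_general {N : ℕ} (hN : 1 ≤ N) (hq : IsPrimitiveRoot q (6 * N - 3)) :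
    q ^ (2 * N - 1) * ∑ k ∈ Icc 1 (N - 1), q ^ k / (1 - q ^ (6 * k)) +
      ∑ k ∈ Icc 1 (N - 1), q ^ (2 * k) / (1 - q ^ (6 * k)) -
      ∑ k ∈ Icc 1 N, 1 / (1 - q ^ (3 * k - 2)) =
      -(N / (1 - q ^ (2 * N - 1))) := by
  obtain ⟨m, rfl⟩ := Nat.exists_eq_add_of_le' hN
  rw [show 6 * (m + 1) - 3 = 3 * (2 * m + 1) by omega] at hq
  rw [show 2 * (m + 1) - 1 = 2 * m + 1 by omega, Nat.add_sub_cancel]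
  have hζ : 1 - q ^ (2 * m + 1) ≠ 0 :=
    sub_ne_zero.mpr (hq.pow_ne_one_of_pos_of_lt (by omega) (by omega)).symm
  have shift : ∑ k ∈ Icc 1 (m + 1), 1 / (1 - q ^ (3 * k - 2)) =
      ∑ t ∈ range (m + 1), 1 / (1 - q ^ (3 * t + 1)) := by
    rw [← Finset.Ico_add_one_right_eq_Icc, sum_Ico_eq_sum_range, Nat.add_sub_cancel]
    exact sum_congr rfl fun t _ => by rw [show 3 * (1 + t) - 2 = 3 * t + 1 by omega]
  have first_sums := one_sub_pow_mul_sum_div_of_isPrimitiveRoot hq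
  simp only [add_div, mul_div_assoc, sum_add_distrib, ← mul_sum] at first_sums
  have last_sum := one_sub_pow_mul_sum_one_div_of_isPrimitiveRoot hq
  simp only [add_div, mul_div_assoc, sum_add_distrib, ← mul_sum] at last_sum
  rw [shift]
  refine mul_left_cancel₀ hζ ?_
  rw [mul_neg, mul_div_cancel₀ _ hζ]
  push_cast
  linear_combination first_sums - last_sum

lemma one_add_eq_three_div_of_isPrimitiveRoot_six {ω : K} (hω : IsPrimitiveRoot ω 6) :
    1 + ω = 3 / (1 - ω ^ 2) := by
  have hω2 : 1 - ω ^ 2 ≠ 0 :=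
    sub_ne_zero.mpr (hω.pow_ne_one_of_pos_of_lt two_ne_zero (by norm_num)).symm
  have hω3 : ω ^ 3 = -1 := (hω.pow (by norm_num) (by norm_num : 6 = 3 * 2)).eq_neg_one_of_two_right
  have cyclotomic : 1 - ω + ω ^ 2 = 0 := by
    refine (mul_eq_zero.mp ?_).resolve_left hω2
    linear_combination (1 - ω) * hω3
  rw [eq_div_iff hω2]
  linear_combination (-2 - ω) * cyclotomic

end RootsOfUnity

lemma isPrimitiveRoot_exp_of_coprime_six_mul_sub_three {N j : ℕ} (hN : 1 ≤ N)
    (hj : Nat.gcd j (6 * N - 3) = 1) :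
    IsPrimitiveRoot (Complex.exp (2 * Real.pi * Complex.I * j / (3 * (2 * N - 1))))
      (6 * N - 3) := by
  convert Complex.isPrimitiveRoot_exp_of_coprime j (6 * N - 3) (by omega) hj using 2
  rw [Nat.cast_sub (by omega)]
  push_cast
  ring

lemma isPrimitiveRoot_exp_pi_mul_I_div_three :
    IsPrimitiveRoot (Complex.exp (Real.pi * Complex.I / 3)) 6 := by
  convert Complex.isPrimitiveRoot_exp 6 (by norm_num) using 2
  push_cast
  ring

theorem odd_case_lemma
    (N j : ℕ) (hN : 1 ≤ N) (hj : Nat.gcd j (6 * N - 3) = 1)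
    (q : ℂ) (hq : q = Complex.exp (2 * Real.pi * Complex.I * j / (3 * (2 * N - 1))))
    (ω : ℂ) (hω : ω = Complex.exp (Real.pi * Complex.I / 3))
    (hω2 : ω ^ 2 = q ^ (2 * N - 1)) :
    ω ^ 2 * ∑ k ∈ Finset.Icc 1 (N - 1), q ^ k / (1 - q ^ (6 * k)) +
      ∑ k ∈ Finset.Icc 1 (N - 1), q ^ (2 * k) / (1 - q ^ (6 * k)) -
      ∑ k ∈ Finset.Icc 1 N, 1 / (1 - q ^ (3 * k - 2)) =
      -((N : ℂ) / 3) * (1 + ω) := by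
  subst hq hω
  rw [hω2, odd_case_lemma_general hN (isPrimitiveRoot_exp_of_coprime_six_mul_sub_three hN hj),
    one_add_eq_three_div_of_isPrimitiveRoot_six isPrimitiveRoot_exp_pi_mul_I_div_three, hω2]
  ring
end

section
/- Let n be a positive integer divisible by 3 and let q be a primitive n-th root of unity. Then Σ_{k=1}^{n/3} (-1)^k q^{k(3k-1)/2}/(1-q^{3k-1}) + Σ_{k=1}^{n/3 - 1} (-1)^k q^{k(3k+5)/2}/(1-q^{3k}) = (1/6)·(2 + (n+1)·q^{2n/3}). -/
open Finset Complex

/-!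
Let `E_N(x) = ∑_{i+k=N} [z^k] ∏_{l<i} (1 - x^l z)`. The two Pascal rules for these coefficients give
a recurrence solved by `E_{3k} = c_k`, `E_{3k+1} = c_{-k}` and `E_{3k+2} = 0`, where
`c_k = (-1)^k x^{k(3k-1)/2}` for `k ∈ ℤ`. Weighting the `i`-th term by `x^i / (1 - x^i)` gives sums
`P_N` which, up to the factor `1 - x^N`, are again combinations of the `E_j`.

At a primitive root of unity `q` of order `n = 3m`, put `w = q^m`. The reflection `j ↦ n - j`,
together with `c_k = -w c_{k-m}`, shows that `∑_{0<j<n} P_j` is `1 + w²` times the left-hand side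
of the theorem. On the other hand the second Pascal rule makes this sum telescope to `-W`, where
`W = ∑_{i+k=n-2} q^k [z^k] ∏_{l<i} (1 - q^l z) / (1 - q^{k+1})`. Finally, `x^n - 1` times the same
sum with `x` in place of `q` is `c_m(x) + c_{-m}(x) - 1`, so `W` is found by differentiating at
`x = q`.
-/

section Pentagonal

theorem pentagonal_natCast_add (a b : ℕ) :
    pentagonal (a + b) = pentagonal a + pentagonal b + 3 * a * b := by
  zify
  linarith [two_mul_natCast_pentagonal a, two_mul_natCast_pentagonal b,
    two_mul_natCast_pentagonal (a + b)]

theorem pentagonal_neg_natCast (k : ℕ) : pentagonal (-k) = pentagonal k + k := by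
  zify
  linarith [two_mul_natCast_pentagonal k, two_mul_natCast_pentagonal_neg k]

variable {R : Type*} [CommRing R] (x : R)

/-- The term `(-1)^k x^{k(3k-1)/2}`, `k ∈ ℤ`, of Euler's pentagonal number series. -/
def pentagonalTerm (k : ℤ) : R := (-1) ^ k.natAbs * x ^ pentagonal k

theorem neg_one_pow_mul_pow_eq_pentagonalTerm (k : ℕ) :
    (-1) ^ k * x ^ (k * (3 * k - 1) / 2) = pentagonalTerm x k := by
  have hexp : k * (3 * k - 1) / 2 = pentagonal k := by
    refine Nat.div_eq_of_eq_mul_right two_pos ?_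
    rcases k.eq_zero_or_pos with rfl | hk
    · rfl
    zify [show 1 ≤ 3 * k by omega]
    exact (two_mul_natCast_pentagonal k).symm
  rw [hexp]
  rfl

theorem neg_one_pow_mul_pow_eq_pentagonalTerm_mul (k : ℕ) :
    (-1) ^ k * x ^ (k * (3 * k + 5) / 2) = pentagonalTerm x k * x ^ (3 * k) := by
  have hexp : k * (3 * k + 5) / 2 = pentagonal k + 3 * k := by
    refine Nat.div_eq_of_eq_mul_right two_pos ?_
    zify
    linarith [two_mul_natCast_pentagonal k]
  rw [hexp, pow_add, ← mul_assoc]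
  rfl

theorem pentagonalTerm_zero : pentagonalTerm x 0 = 1 := by
  simp [pentagonalTerm, pentagonal]

theorem pentagonalTerm_natCast_add (a b : ℕ) :
    pentagonalTerm x (a + b) = pentagonalTerm x a * pentagonalTerm x b * x ^ (3 * a * b) := by
  simp only [pentagonalTerm, pentagonal_natCast_add]
  rw [← Nat.cast_add]
  simp only [Int.natAbs_natCast]
  ring

theorem pentagonalTerm_neg_natCast (k : ℕ) :
    pentagonalTerm x (-k) = pentagonalTerm x k * x ^ k := by
  simp only [pentagonalTerm, pentagonal_neg_natCast, Int.natAbs_neg]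
  ring

theorem pentagonalTerm_mul_neg_natCast (k : ℕ) :
    pentagonalTerm x k * pentagonalTerm x (-k) = x ^ (3 * k * k) := by
  have hk : pentagonal k + pentagonal (-k) = 3 * k * k := by
    zify
    linarith [two_mul_natCast_pentagonal k, two_mul_natCast_pentagonal_neg k]
  rw [pentagonalTerm, pentagonalTerm, Int.natAbs_neg, mul_mul_mul_comm, ← mul_pow, ← pow_add, hk]
  simp

theorem pentagonalTerm_natCast_add_one (k : ℕ) :
    pentagonalTerm x (k + 1) = -x ^ (3 * k + 1) * pentagonalTerm x k := by
  have h := pentagonalTerm_natCast_add x k 1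
  simp only [Nat.cast_one] at h
  rw [h, show pentagonalTerm x 1 = -x by simp [pentagonalTerm, pentagonal]]
  ring

theorem pentagonalTerm_neg_natCast_add_one (k : ℕ) :
    pentagonalTerm x (-(k + 1)) = -x ^ (3 * k + 2) * pentagonalTerm x (-k) := by
  have h := pentagonalTerm_neg_natCast x (k + 1)
  push_cast at h
  rw [h, pentagonalTerm_natCast_add_one, pentagonalTerm_neg_natCast]
  ring

open Polynomial in
theorem mul_eval_derivative_pentagonalTerm (k : ℤ) :
    x * (derivative (pentagonalTerm (X : R[X]) k)).eval x = pentagonal k * pentagonalTerm x k := by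
  have hconst : ((-1 : R[X]) ^ k.natAbs) = C ((-1) ^ k.natAbs) := by simp
  rw [pentagonalTerm, hconst, derivative_C_mul, derivative_X_pow]
  rcases hN : pentagonal k with _ | N
  · simp
  · simp [pentagonalTerm, hN]
    ring

end Pentagonal

section Coefficients

open Polynomial

variable {R : Type*} [CommRing R] (x : R)

/-- The coefficient of `z ^ k` in the finite `q`-Pochhammer product `∏_{l < i} (1 - x ^ l z)`, that
is, `(-1)^k x^{k(k-1)/2}` times the Gaussian binomial coefficient of `i` and `k`. -/
noncomputable def qPochhammerCoeff (i k : ℕ) : R :=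
  (∏ l ∈ range i, (1 - C (x ^ l) * X)).coeff k

theorem qPochhammerCoeff_zero_right (i : ℕ) : qPochhammerCoeff x i 0 = 1 := by
  simp [qPochhammerCoeff, coeff_zero_eq_eval_zero, eval_prod]

theorem qPochhammerCoeff_zero_succ (k : ℕ) : qPochhammerCoeff x 0 (k + 1) = 0 := by
  simp [qPochhammerCoeff, coeff_one]

theorem qPochhammerCoeff_succ_succ (i k : ℕ) :
    qPochhammerCoeff x (i + 1) (k + 1) =
      qPochhammerCoeff x i (k + 1) - x ^ i * qPochhammerCoeff x i k := by
  rw [qPochhammerCoeff, prod_range_succ, mul_one_sub, mul_left_comm, coeff_sub, coeff_C_mul,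
    coeff_mul_X]
  rfl

theorem qPochhammerCoeff_succ_succ' (i k : ℕ) :
    qPochhammerCoeff x (i + 1) (k + 1) =
      x ^ (k + 1) * qPochhammerCoeff x i (k + 1) - x ^ k * qPochhammerCoeff x i k := by
  have hcomp : ∏ l ∈ range i, (1 - C (x ^ (l + 1)) * X) =
      (∏ l ∈ range i, (1 - C (x ^ l) * X)).comp (C x * X) := by
    simp [Polynomial.prod_comp, pow_succ, mul_assoc]
  rw [qPochhammerCoeff, prod_range_succ', hcomp, pow_zero, C_1, one_mul, mul_one_sub, coeff_sub,
    coeff_mul_X, comp_C_mul_X_coeff, comp_C_mul_X_coeff, mul_comm, mul_comm _ (x ^ k)]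
  rfl

theorem one_sub_pow_mul_qPochhammerCoeff (i k : ℕ) :
    (1 - x ^ (k + 1)) * qPochhammerCoeff x (i + 1) (k + 1) =
      -x ^ k * (1 - x ^ (i + 1)) * qPochhammerCoeff x i k := by
  linear_combination qPochhammerCoeff_succ_succ' x i k -
    x ^ (k + 1) * qPochhammerCoeff_succ_succ x i k

theorem qPochhammerCoeff_sub_pow_mul (i k : ℕ) :
    (1 - x ^ (k + 1)) *
        (qPochhammerCoeff x (i + 1) (k + 1) - x ^ k * qPochhammerCoeff x i k * x ^ (i + 1)) =
      (x ^ (i + k + 2) - 1) * (x ^ k * qPochhammerCoeff x i k) := by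
  linear_combination one_sub_pow_mul_qPochhammerCoeff x i k

theorem map_qPochhammerCoeff {S : Type*} [CommRing S] (φ : R →+* S) (i k : ℕ) :
    φ (qPochhammerCoeff x i k) = qPochhammerCoeff (φ x) i k := by
  simp [qPochhammerCoeff, ← coeff_map, Polynomial.map_prod]

/-- The weighted sum of the coefficients `qPochhammerCoeff x i k` over the diagonal `i + k = N`. -/
noncomputable def diagonalSum (f : ℕ → R) (N : ℕ) : R :=
  ∑ p ∈ antidiagonal N, qPochhammerCoeff x p.1 p.2 * f p.1

theorem diagonalSum_one (f : ℕ → R) : diagonalSum x f 1 = f 1 := by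
  simp [diagonalSum, Nat.antidiagonal_succ, qPochhammerCoeff_zero_right, qPochhammerCoeff_zero_succ]

theorem diagonalSum_add_two (f : ℕ → R) (N : ℕ) :
    diagonalSum x f (N + 2) = f (N + 2) +
      ∑ p ∈ antidiagonal N, qPochhammerCoeff x (p.1 + 1) (p.2 + 1) * f (p.1 + 1) := by
  rw [diagonalSum, Nat.sum_antidiagonal_succ, Nat.sum_antidiagonal_succ']
  simp only [qPochhammerCoeff_zero_succ, qPochhammerCoeff_zero_right]
  ring

theorem sum_range_diagonalSum (f : ℕ → R) (N : ℕ) :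
    ∑ j ∈ range (N + 1), diagonalSum x f (j + 1) =
      ∑ p ∈ antidiagonal N, x ^ p.2 * qPochhammerCoeff x p.1 p.2 * f (p.1 + 1) := by
  induction N with
  | zero => simp [diagonalSum_one, qPochhammerCoeff_zero_right]
  | succ N ih =>
    rw [sum_range_succ, ih, diagonalSum_add_two, Nat.sum_antidiagonal_succ']
    simp only [qPochhammerCoeff_succ_succ', sub_mul, sum_sub_distrib, qPochhammerCoeff_zero_right]
    ring

theorem diagonalSum_one_add_two (N : ℕ) :
    diagonalSum x 1 (N + 2) = diagonalSum x 1 (N + 1) - diagonalSum x (x ^ ·) N := by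
  rw [diagonalSum_add_two]
  simp only [diagonalSum, Nat.sum_antidiagonal_succ', qPochhammerCoeff_succ_succ,
    qPochhammerCoeff_zero_right, sum_sub_distrib, Pi.one_apply, mul_one, mul_comm (x ^ _)]
  ring

theorem sum_antidiagonal_pow_mul_qPochhammerCoeff (N : ℕ) :
    ∑ p ∈ antidiagonal N, x ^ p.2 * qPochhammerCoeff x p.1 p.2 * x ^ (p.1 + 1) =
      x ^ (N + 1) * diagonalSum x 1 N := by
  rw [diagonalSum, mul_sum]
  refine sum_congr rfl fun p hp ↦ ?_
  rw [← mem_antidiagonal.1 hp, Pi.one_apply]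
  ring

theorem diagonalSum_pow_add_two (N : ℕ) :
    diagonalSum x (x ^ ·) (N + 2) =
      x ^ (N + 2) * diagonalSum x 1 (N + 1) - x ^ (N + 1) * diagonalSum x 1 N := by
  have h := sum_range_diagonalSum x (x ^ ·) (N + 1)
  rw [sum_range_succ, sum_range_diagonalSum, sum_antidiagonal_pow_mul_qPochhammerCoeff,
    sum_antidiagonal_pow_mul_qPochhammerCoeff] at h
  linear_combination h

theorem diagonalSum_one_add_four (N : ℕ) :
    diagonalSum x 1 (N + 4) = diagonalSum x 1 (N + 3) - x ^ (N + 2) * diagonalSum x 1 (N + 1) +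
      x ^ (N + 1) * diagonalSum x 1 N := by
  linear_combination diagonalSum_one_add_two x (N + 2) - diagonalSum_pow_add_two x N

theorem diagonalSum_one_three_mul (k : ℕ) :
    diagonalSum x 1 (3 * k) = pentagonalTerm x k ∧
      diagonalSum x 1 (3 * k + 1) = pentagonalTerm x (-k) ∧
      diagonalSum x 1 (3 * k + 2) = 0 ∧
      diagonalSum x 1 (3 * k + 3) = pentagonalTerm x (k + 1) := by
  induction k with
  | zero =>
    simp [diagonalSum, Nat.antidiagonal_succ, qPochhammerCoeff_succ_succ,
      qPochhammerCoeff_zero_right, qPochhammerCoeff_zero_succ, pentagonalTerm, pentagonal]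
    ring
  | succ k ih =>
    obtain ⟨h0, h1, h2, h3⟩ := ih
    have hpos := pentagonalTerm_natCast_add_one x k
    have hneg := pentagonalTerm_neg_natCast_add_one x k
    have hnegk := pentagonalTerm_neg_natCast x k
    have hnext := pentagonalTerm_natCast_add_one x (k + 1)
    push_cast at hnext ⊢
    have h4 : diagonalSum x 1 (3 * k + 4) = pentagonalTerm x (-(k + 1)) := by
      rw [diagonalSum_one_add_four, h3, h1, h0, hpos, hneg, hnegk]
      ring
    have h5 : diagonalSum x 1 (3 * k + 5) = 0 := by
      rw [diagonalSum_one_add_four x (3 * k + 1), h4, h2, h1, hneg]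
      ring
    have h6 : diagonalSum x 1 (3 * k + 6) = pentagonalTerm x (k + 1 + 1) := by
      rw [diagonalSum_one_add_four x (3 * k + 2), h5, h3, h2, hnext]
      ring
    exact ⟨h3, h4, h5, h6⟩

theorem pentagonalTerm_add_pentagonalTerm_neg (M : ℕ) :
    pentagonalTerm x (M + 1) + pentagonalTerm x (-(M + 1)) =
      1 + ∑ p ∈ antidiagonal (3 * M + 1), (qPochhammerCoeff x (p.1 + 1) (p.2 + 1) -
        x ^ p.2 * qPochhammerCoeff x p.1 p.2 * x ^ (p.1 + 1)) := by
  obtain ⟨-, h1, -, h3⟩ := diagonalSum_one_three_mul x M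
  rw [diagonalSum_add_two] at h3
  simp only [Pi.one_apply, mul_one] at h3
  rw [sum_sub_distrib, sum_antidiagonal_pow_mul_qPochhammerCoeff, h1,
    pentagonalTerm_neg_natCast_add_one]
  linear_combination -h3

end Coefficients

section LambertWeights

variable {K : Type*} [Field K] {x : K}

/-- The diagonal sum `∑_{i + k = N} qPochhammerCoeff x i k * x ^ i / (1 - x ^ i)`, whose weights are
those of a Lambert series. For `N > 0` the junk weight `0` at `i = 0` is harmless, because its
coefficient vanishes. -/
noncomputable def lambertDiagonalSum (x : K) (N : ℕ) : K :=
  diagonalSum x (fun i ↦ x ^ i / (1 - x ^ i)) N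

theorem one_sub_pow_mul_lambertDiagonalSum {N : ℕ} (hx : ∀ i, 0 < i → i ≤ N + 2 → 1 - x ^ i ≠ 0) :
    (1 - x ^ (N + 2)) * lambertDiagonalSum x (N + 2) =
      x ^ (N + 2) * diagonalSum x 1 (N + 2) - x ^ (N + 1) * diagonalSum x 1 N := by
  rw [lambertDiagonalSum, diagonalSum_add_two, diagonalSum_add_two, diagonalSum, mul_add, mul_add,
    mul_div_cancel₀ _ (hx _ (by omega) le_rfl), mul_sum, mul_sum, mul_sum, add_sub_assoc,
    ← sum_sub_distrib]
  congr 1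
  · simp
  refine sum_congr rfl fun p hp ↦ ?_
  have hN := mem_antidiagonal.1 hp
  have hi := hx (p.1 + 1) (by omega) (by omega)
  simp only [Pi.one_apply]
  field_simp
  rw [← hN]
  linear_combination x ^ (p.1 + 1) * one_sub_pow_mul_qPochhammerCoeff x p.1 p.2

theorem lambertDiagonalSum_three_mul_add_one {k : ℕ}
    (hx : ∀ i, 0 < i → i ≤ 3 * k + 1 → 1 - x ^ i ≠ 0) :
    lambertDiagonalSum x (3 * k + 1) =
      pentagonalTerm x (-k) * (x ^ (3 * k + 1) / (1 - x ^ (3 * k + 1))) := by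
  cases k with
  | zero => simp [lambertDiagonalSum, diagonalSum_one, pentagonalTerm_zero]
  | succ k =>
    have h := one_sub_pow_mul_lambertDiagonalSum (N := 3 * k + 2) hx
    obtain ⟨-, -, h2, -⟩ := diagonalSum_one_three_mul x k
    obtain ⟨-, h1, -, -⟩ := diagonalSum_one_three_mul x (k + 1)
    rw [h2, mul_zero, sub_zero, show 3 * k + 2 + 2 = 3 * (k + 1) + 1 by ring, h1] at h
    rw [← mul_div_assoc, eq_div_iff (hx _ (by omega) le_rfl)]
    linear_combination h

theorem lambertDiagonalSum_three_mul_add_two {k : ℕ}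
    (hx : ∀ i, 0 < i → i ≤ 3 * k + 2 → 1 - x ^ i ≠ 0) :
    lambertDiagonalSum x (3 * k + 2) = pentagonalTerm x (k + 1) / (1 - x ^ (3 * k + 2)) := by
  have h := one_sub_pow_mul_lambertDiagonalSum hx
  obtain ⟨h0, -, h2, -⟩ := diagonalSum_one_three_mul x k
  rw [eq_div_iff (hx _ (by omega) le_rfl), mul_comm, h, h0, h2, pentagonalTerm_natCast_add_one]
  ring

theorem lambertDiagonalSum_three_mul_add_three {k : ℕ}
    (hx : ∀ i, 0 < i → i ≤ 3 * k + 3 → 1 - x ^ i ≠ 0) :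
    lambertDiagonalSum x (3 * k + 3) =
      pentagonalTerm x (k + 1) * (x ^ (3 * k + 3) / (1 - x ^ (3 * k + 3))) +
        pentagonalTerm x (-(k + 1)) / (1 - x ^ (3 * k + 3)) := by
  have h := one_sub_pow_mul_lambertDiagonalSum (N := 3 * k + 1) hx
  obtain ⟨-, h1, -, h3⟩ := diagonalSum_one_three_mul x k
  rw [h1, h3] at h
  rw [← mul_div_assoc, ← add_div, eq_div_iff (hx _ (by omega) le_rfl), mul_comm, h,
    pentagonalTerm_neg_natCast_add_one]
  ring

theorem div_one_sub_of_mul_eq_one {s t : K} (h : s * t = 1) : s / (1 - s) = -(1 / (1 - t)) := by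
  obtain rfl := eq_inv_of_mul_eq_one_left h
  have ht : t ≠ 0 := right_ne_zero_of_mul_eq_one h
  rw [← neg_sub t 1, div_neg, neg_neg, ← mul_div_mul_left _ _ ht, mul_sub, mul_inv_cancel₀ ht,
    mul_one]

theorem sum_range_lambertDiagonalSum {N : ℕ} (hx : x ^ (N + 2) = 1) :
    ∑ j ∈ range (N + 1), lambertDiagonalSum x (j + 1) =
      -∑ p ∈ antidiagonal N, x ^ p.2 * qPochhammerCoeff x p.1 p.2 / (1 - x ^ (p.2 + 1)) := by
  simp only [lambertDiagonalSum]
  rw [sum_range_diagonalSum, ← sum_neg_distrib]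
  refine sum_congr rfl fun p hp ↦ ?_
  have hinv : x ^ (p.1 + 1) * x ^ (p.2 + 1) = 1 := by
    rw [← pow_add, ← hx, ← mem_antidiagonal.1 hp]
    ring
  rw [div_one_sub_of_mul_eq_one hinv]
  ring

end LambertWeights

section Derivative

open Polynomial

variable {K : Type*} [Field K] {q : K}

/-- An algebraic form of L'Hôpital's rule. -/
theorem mul_eval_derivative_of_mul_eq {n : ℕ} (hq : q ^ n = 1) {f g h : K[X]}
    (hf : f.eval q ≠ 0) (hfg : f * g = (X ^ n - 1) * h) :
    q * (derivative g).eval q = n * (h.eval q / f.eval q) := by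
  have hg : g.eval q = 0 := by
    have := congr(eval q $hfg)
    simpa [hq, hf] using this
  have hderiv := congr(q * eval q (derivative $hfg))
  have hpow : q * (n * q ^ (n - 1)) = n := by
    rcases n with _ | n
    · simp
    · rw [mul_left_comm, Nat.add_sub_cancel, ← pow_succ', hq, mul_one]
  simp only [derivative_mul, eval_add, eval_mul, hg, eval_sub, eval_pow, eval_X, eval_one, hq,
    derivative_sub, derivative_X_pow, derivative_one, sub_zero, sub_self, zero_mul,
    mul_zero, add_zero, zero_add, eval_C] at hderiv
  rw [← mul_div_assoc, eq_div_iff hf]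
  linear_combination hderiv + h.eval q * hpow

end Derivative

theorem sum_range_three_mul_add_two {A : Type*} [AddCommMonoid A] (f : ℕ → A) (M : ℕ) :
    ∑ j ∈ range (3 * M + 2), f (j + 1) =
      ∑ k ∈ range (M + 1), f (3 * k + 1) + ∑ k ∈ range (M + 1), f (3 * k + 2) +
        ∑ k ∈ range M, f (3 * k + 3) := by
  induction M with
  | zero => simp [sum_range_succ]
  | succ M ih =>
    rw [show 3 * (M + 1) + 2 = 3 * M + 2 + 1 + 1 + 1 by ring, sum_range_succ, sum_range_succ,
      sum_range_succ, ih, sum_range_succ _ (M + 1), sum_range_succ _ (M + 1),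
      sum_range_succ (fun k ↦ f (3 * k + 3)) M]
    simp only [show 3 * (M + 1) = 3 * M + 3 by ring]
    abel

section PrimitiveRoot

variable {R : Type*} [CommRing R] {q : R} {M : ℕ}

theorem one_sub_pow_ne_zero_of_isPrimitiveRoot {n i : ℕ} (hq : IsPrimitiveRoot q n) (hi : 0 < i)
    (hin : i < n) : 1 - q ^ i ≠ 0 :=
  sub_ne_zero.2 (hq.pow_ne_one_of_pos_of_lt hi.ne' hin).symm

variable [IsDomain R] (hq : IsPrimitiveRoot q (3 * (M + 1)))
include hq

theorem one_add_pow_third_add_sq_eq_zero : 1 + q ^ (M + 1) + (q ^ (M + 1)) ^ 2 = 0 := by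
  have h := (hq.pow (by omega) (mul_comm _ _)).geom_sum_eq_zero (by norm_num)
  simpa [sum_range_succ] using h

theorem pentagonalTerm_third : pentagonalTerm q (M + 1) = -q ^ (M + 1) := by
  have h := pentagonalTerm_add_pentagonalTerm_neg q M
  rw [sum_eq_zero, add_zero] at h
  · have hneg := pentagonalTerm_neg_natCast q (M + 1)
    push_cast at hneg
    rw [hneg] at h
    linear_combination (-q ^ (M + 1)) * h +
      pentagonalTerm q (M + 1) * one_add_pow_third_add_sq_eq_zero hq
  · intro p hp
    have hn : p.1 + p.2 + 2 = 3 * (M + 1) := by linarith [mem_antidiagonal.1 hp]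
    have hmul := qPochhammerCoeff_sub_pow_mul q p.1 p.2
    rw [hn, hq.pow_eq_one, sub_self, zero_mul] at hmul
    exact (mul_eq_zero.1 hmul).resolve_left
      (one_sub_pow_ne_zero_of_isPrimitiveRoot hq (by omega) (by omega))

theorem pentagonalTerm_neg_of_add_eq {a b : ℕ} (hab : a + b = M + 1) :
    pentagonalTerm q (-b) = -(q ^ (M + 1)) ^ 2 * pentagonalTerm q a := by
  have hadd : pentagonalTerm q a * pentagonalTerm q b * q ^ (3 * a * b) = -q ^ (M + 1) := by
    rw [← pentagonalTerm_natCast_add, ← pentagonalTerm_third hq]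
    exact_mod_cast congr(pentagonalTerm q $hab)
  have hmul := pentagonalTerm_mul_neg_natCast q b
  have hone : q ^ (3 * a * b) * q ^ (3 * b * b) = 1 := by
    rw [← pow_add, show 3 * a * b + 3 * b * b = 3 * (a + b) * b by ring, hab, pow_mul,
      hq.pow_eq_one, one_pow]
  have hcube : (q ^ (M + 1)) ^ 3 = 1 := by
    rw [← pow_mul, mul_comm, hq.pow_eq_one]
  linear_combination (-(q ^ (M + 1)) ^ 2 * pentagonalTerm q a) * hone -
    (q ^ (M + 1)) ^ 2 * pentagonalTerm q a * q ^ (3 * a * b) * hmul +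
    (q ^ (M + 1)) ^ 2 * pentagonalTerm q (-b) * hadd - pentagonalTerm q (-b) * hcube

end PrimitiveRoot

section LambertSum

variable {K : Type*} [Field K] {q : K} {M : ℕ}

/-- The left-hand side of the identity for `n = 3(M + 1)`, written with `pentagonalTerm` and with
both summation indices shifted to start at `0`. -/
def pentagonalLambertSum (q : K) (M : ℕ) : K :=
  ∑ k ∈ range (M + 1), pentagonalTerm q (k + 1) / (1 - q ^ (3 * k + 2)) +
    ∑ k ∈ range M, pentagonalTerm q (k + 1) * (q ^ (3 * k + 3) / (1 - q ^ (3 * k + 3)))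

variable (hq : IsPrimitiveRoot q (3 * (M + 1)))
include hq

open Polynomial in
theorem natCast_mul_sum_pow_mul_qPochhammerCoeff :
    (3 * (M + 1) : ℕ) * ∑ p ∈ antidiagonal (3 * M + 1),
        q ^ p.2 * qPochhammerCoeff q p.1 p.2 / (1 - q ^ (p.2 + 1)) =
      pentagonal (M + 1) * pentagonalTerm q (M + 1) +
        pentagonal (-(M + 1)) * pentagonalTerm q (-(M + 1)) := by
  have h := congr(q * eval q (derivative $(pentagonalTerm_add_pentagonalTerm_neg (X : K[X]) M)))
  rw [derivative_add, eval_add, mul_add, mul_eval_derivative_pentagonalTerm,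
    mul_eval_derivative_pentagonalTerm, derivative_add, derivative_one, zero_add, derivative_sum,
    eval_finsetSum, mul_sum] at h
  rw [h, mul_sum]
  refine sum_congr rfl fun p hp ↦ ?_
  have hn : p.1 + p.2 + 2 = 3 * (M + 1) := by linarith [mem_antidiagonal.1 hp]
  have hfg := qPochhammerCoeff_sub_pow_mul (X : K[X]) p.1 p.2
  rw [hn] at hfg
  have hden : (1 - X ^ (p.2 + 1) : K[X]).eval q ≠ 0 := by
    simpa using one_sub_pow_ne_zero_of_isPrimitiveRoot hq (Nat.succ_pos p.2) (by omega)
  rw [mul_eval_derivative_of_mul_eq hq.pow_eq_one hden hfg]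
  have heval := map_qPochhammerCoeff (X : K[X]) (evalRingHom q) p.1 p.2
  simp only [coe_evalRingHom, eval_X] at heval
  simp [heval]

theorem six_mul_sum_pow_mul_qPochhammerCoeff :
    6 * ∑ p ∈ antidiagonal (3 * M + 1),
        q ^ p.2 * qPochhammerCoeff q p.1 p.2 / (1 - q ^ (p.2 + 1)) =
      3 * (M + 1) + q ^ (M + 1) - (q ^ (M + 1)) ^ 2 := by
  have h := natCast_mul_sum_pow_mul_qPochhammerCoeff hq
  have hneg := pentagonalTerm_neg_natCast q (M + 1)
  push_cast at hneg
  rw [hneg, pentagonalTerm_third hq] at h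
  have hpos : (2 * pentagonal (M + 1) : K) = (M + 1) * (3 * (M + 1) - 1) := by
    exact_mod_cast congr((($(two_mul_natCast_pentagonal (M + 1)) : ℤ) : K))
  have hneg' : (2 * pentagonal (-(M + 1)) : K) = (M + 1) * (3 * (M + 1) + 1) := by
    exact_mod_cast congr((($(two_mul_natCast_pentagonal_neg (M + 1)) : ℤ) : K))
  have hn : ((3 * (M + 1) : ℕ) : K) ≠ 0 := hq.neZero'.out
  apply mul_left_cancel₀ hn
  push_cast at h ⊢
  linear_combination 6 * h - 3 * q ^ (M + 1) * hpos - 3 * (q ^ (M + 1)) ^ 2 * hneg' -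
    9 * (M + 1) ^ 2 * one_add_pow_third_add_sq_eq_zero hq

theorem sum_range_lambertDiagonalSum_three_mul_add_one :
    ∑ k ∈ range (M + 1), lambertDiagonalSum q (3 * k + 1) =
      (q ^ (M + 1)) ^ 2 *
        ∑ k ∈ range (M + 1), pentagonalTerm q (k + 1) / (1 - q ^ (3 * k + 2)) := by
  rw [← sum_range_reflect, mul_sum]
  refine sum_congr rfl fun k hk ↦ ?_
  rw [mem_range] at hk
  obtain ⟨l, hl⟩ := Nat.exists_eq_add_of_lt hk
  have hinv : q ^ (3 * l + 1) * q ^ (3 * k + 2) = 1 := by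
    rw [← pow_add, ← hq.pow_eq_one, hl]
    ring
  have hneg := pentagonalTerm_neg_of_add_eq hq (a := k + 1) (b := l) (by omega)
  push_cast at hneg
  rw [show M + 1 - 1 - k = l by omega, lambertDiagonalSum_three_mul_add_one fun i hi hil ↦
    one_sub_pow_ne_zero_of_isPrimitiveRoot hq hi (by omega), div_one_sub_of_mul_eq_one hinv, hneg]
  ring

theorem sum_range_pentagonalTerm_neg_div :
    ∑ k ∈ range M, pentagonalTerm q (-(k + 1)) / (1 - q ^ (3 * k + 3)) =
      (q ^ (M + 1)) ^ 2 *
        ∑ k ∈ range M, pentagonalTerm q (k + 1) * (q ^ (3 * k + 3) / (1 - q ^ (3 * k + 3))) := by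
  rw [← sum_range_reflect, mul_sum]
  refine sum_congr rfl fun k hk ↦ ?_
  rw [mem_range] at hk
  obtain ⟨l, hl⟩ := Nat.exists_eq_add_of_lt hk
  have hinv : q ^ (3 * k + 3) * q ^ (3 * l + 3) = 1 := by
    rw [← pow_add, ← hq.pow_eq_one, hl]
    ring
  have hneg := pentagonalTerm_neg_of_add_eq hq (a := k + 1) (b := l + 1) (by omega)
  push_cast at hneg
  rw [show M - 1 - k = l by omega, div_one_sub_of_mul_eq_one hinv, hneg]
  ring

theorem sum_range_lambertDiagonalSum_third :
    ∑ j ∈ range (3 * M + 2), lambertDiagonalSum q (j + 1) =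
      (1 + (q ^ (M + 1)) ^ 2) * pentagonalLambertSum q M := by
  have hne {k : ℕ} (hk : k < 3 * (M + 1)) (i : ℕ) (hi : 0 < i) (hik : i ≤ k) : 1 - q ^ i ≠ 0 :=
    one_sub_pow_ne_zero_of_isPrimitiveRoot hq hi (hik.trans_lt hk)
  have htwo : ∑ k ∈ range (M + 1), lambertDiagonalSum q (3 * k + 2) =
      ∑ k ∈ range (M + 1), pentagonalTerm q (k + 1) / (1 - q ^ (3 * k + 2)) :=
    sum_congr rfl fun k hk ↦
      lambertDiagonalSum_three_mul_add_two (hne (by linarith [mem_range.1 hk]))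
  have hthree : ∑ k ∈ range M, lambertDiagonalSum q (3 * k + 3) =
      ∑ k ∈ range M, (pentagonalTerm q (k + 1) * (q ^ (3 * k + 3) / (1 - q ^ (3 * k + 3))) +
        pentagonalTerm q (-(k + 1)) / (1 - q ^ (3 * k + 3))) :=
    sum_congr rfl fun k hk ↦
      lambertDiagonalSum_three_mul_add_three (hne (by linarith [mem_range.1 hk]))
  rw [sum_range_three_mul_add_two, sum_range_lambertDiagonalSum_three_mul_add_one hq, htwo, hthree,
    sum_add_distrib, sum_range_pentagonalTerm_neg_div hq, pentagonalLambertSum]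
  ring

theorem six_mul_pentagonalLambertSum :
    6 * pentagonalLambertSum q M = 2 + (3 * (M + 1) + 1) * (q ^ (M + 1)) ^ 2 := by
  have h := sum_range_lambertDiagonalSum_third hq
  rw [sum_range_lambertDiagonalSum (N := 3 * M + 1) hq.pow_eq_one] at h
  have hW := six_mul_sum_pow_mul_qPochhammerCoeff hq
  have hw := one_add_pow_third_add_sq_eq_zero hq
  set w := q ^ (M + 1)
  have hcube : w ^ 3 = 1 := by linear_combination (w - 1) * hw
  set S := pentagonalLambertSum q M
  have hS : 6 * (w * S) = 3 * (M + 1) + w - w ^ 2 := by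
    linear_combination hW + 6 * h + 6 * S * hw
  linear_combination w ^ 2 * hS + (1 - w - 6 * S) * hcube - hw

end LambertSum

theorem sum_Icc_one_eq_sum_range {A : Type*} [AddCommMonoid A] (f : ℕ → A) (N : ℕ) :
    ∑ k ∈ Icc 1 N, f k = ∑ k ∈ range N, f (k + 1) := by
  rw [range_eq_Ico, sum_Ico_add' f 0 N 1]
  rfl

theorem main_identity_general {K : Type*} [Field K] {n : ℕ} (hn : 0 < n) (h3 : 3 ∣ n) {q : K}
    (hq : IsPrimitiveRoot q n) :
    6 * (∑ k ∈ Icc 1 (n / 3), (-1) ^ k * q ^ (k * (3 * k - 1) / 2) / (1 - q ^ (3 * k - 1)) +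
        ∑ k ∈ Icc 1 (n / 3 - 1), (-1) ^ k * q ^ (k * (3 * k + 5) / 2) / (1 - q ^ (3 * k))) =
      2 + (n + 1) * q ^ (2 * n / 3) := by
  obtain ⟨m, rfl⟩ := h3
  obtain ⟨M, rfl⟩ := Nat.exists_eq_add_one.2 (pos_of_mul_pos_right hn three_pos.le)
  have h := six_mul_pentagonalLambertSum hq
  rw [show 3 * (M + 1) / 3 = M + 1 by omega, show 2 * (3 * (M + 1)) / 3 = (M + 1) * 2 by omega,
    Nat.add_sub_cancel, pow_mul]
  simp only [neg_one_pow_mul_pow_eq_pentagonalTerm, neg_one_pow_mul_pow_eq_pentagonalTerm_mul,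
    sum_Icc_one_eq_sum_range, mul_div_assoc]
  push_cast
  exact h

theorem main_identity
    (n : ℕ) (hn : 0 < n) (h3 : 3 ∣ n) (q : ℂ) (hq : IsPrimitiveRoot q n) :
    ∑ k ∈ Finset.Icc 1 (n / 3), (-1 : ℂ) ^ k * q ^ (k * (3 * k - 1) / 2) / (1 - q ^ (3 * k - 1)) +
      ∑ k ∈ Finset.Icc 1 (n / 3 - 1), (-1 : ℂ) ^ k * q ^ (k * (3 * k + 5) / 2) / (1 - q ^ (3 * k)) =
      (1 / 6 : ℂ) * (2 + (n + 1) * q ^ (2 * n / 3)) := by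
  linear_combination (1 / 6 : ℂ) * main_identity_general hn h3 hq
end

section
/- Let N > 1 with 2N-1 not divisible by 3, let χ be a non-principal Dirichlet character modulo 2N-1, and let ε = e^{2πi/3}. Then (Σ_{j=0}^{2N-2} j·χ(6j+1))·(Σ_{k=1}^{2N-2} ε^{(2N-1)k}·χ(k)) = -(Σ_{j=0}^{2N-2} j·χ(6j+2))·(Σ_{k=1-N}^{N-1} ε^{2(2N-1)k+2}·χ(k)). -/
open Finset Complex Real

/-!
Write `M = 2N - 1` and `s = χ(-1)`. Both sides of the identity are governed by the same factor
`1 + s χ(2)`, which arises twice by splitting a sum into even and odd terms and reflecting.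

* Let `β(c, a) = ∑ j χ(cj + a)`. Splitting `j` by parity gives `β(3, 1) = β(6, 1) + β(6, 4)`, while
  `β(6, 4) = χ(2) β(3, 2)` and `β(3, 2) = -s β(3, 1)` by `j ↦ M - 1 - j`. Hence
  `β(6, 1) = (1 + s χ(2)) β(3, 1)`, and `β(6, 2) = χ(2) β(3, 1)`.
* Put `v = ε ^ M`, so that `v ^ M = ε` because `M² ≡ 1 mod 3`, and let `T = ∑_{|k| < N} v^{2k} χ(k)`
  and `S(z) = ∑_{l < M} z^l χ(l)`. The odd integers in `[0, 2M)` are the `2k + M` with `|k| < N`, so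
  splitting `∑_{l < 2M} v^l χ(l)` by parity gives `(1 + ε) S(v) = χ(2) S(v²) + ε χ(2) T`. As
  `v² = v⁻¹`, the reflection `l ↦ M - l` gives `ε S(v²) = s S(v)`, and therefore
  `χ(2) ε² T = -(1 + s χ(2)) S(v)`.
-/

section Parity

variable {R : Type*} {M N : ℕ}

lemma sum_range_even_add_sum_range_odd [AddCommMonoid R] (f : ℕ → R) (n : ℕ) :
    ∑ j ∈ range n, f (2 * j) + ∑ j ∈ range n, f (2 * j + 1) = ∑ l ∈ range (2 * n), f l := by
  induction n with
  | zero => simp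
  | succ n ih =>
    rw [Nat.mul_succ, sum_range_succ _ (2 * n + 1), sum_range_succ _ (2 * n), ← ih,
      sum_range_succ, sum_range_succ]
    abel

lemma sum_Icc_symm_eq_sum_range [AddCommMonoid R] (hMN : M + 1 = 2 * N) (f : ℤ → R) :
    ∑ k ∈ Icc (1 - (N : ℤ)) (N - 1), f k = ∑ j ∈ range M, f (j + 1 - N) := by
  refine sum_nbij' (fun k => (k + N - 1).toNat) (fun j => j + 1 - N) ?_ ?_ ?_ ?_ ?_
  · simp only [mem_Icc, mem_range]; omega
  · simp only [mem_Icc, mem_range]; omega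
  · simp only [mem_Icc]; omega
  · omega
  · intro k hk
    rw [mem_Icc] at hk
    congr 1
    omega

lemma sum_Icc_even_add_sum_range_even [CommSemiring R] (hMN : M + 1 = 2 * N) {f : ℤ → R} {u : R}
    (hf : ∀ k, f (k + M) = u * f k) :
    u * ∑ k ∈ Icc (1 - (N : ℤ)) (N - 1), f (2 * k) + ∑ l ∈ range M, f (2 * l) =
      (1 + u) * ∑ l ∈ range M, f l := by
  have odd : u * ∑ k ∈ Icc (1 - (N : ℤ)) (N - 1), f (2 * k) =
      ∑ j ∈ range M, f ((2 * j + 1 : ℕ) : ℤ) := by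
    rw [sum_Icc_symm_eq_sum_range hMN, mul_sum]
    refine sum_congr rfl fun j _ => ?_
    rw [← hf]
    congr 1
    omega
  have even : ∑ l ∈ range M, f (2 * l) = ∑ l ∈ range M, f ((2 * l : ℕ) : ℤ) := by push_cast; rfl
  have shift : ∑ l ∈ range M, f ((M + l : ℕ) : ℤ) = u * ∑ l ∈ range M, f l := by
    rw [mul_sum]
    refine sum_congr rfl fun l _ => ?_
    rw [← hf, Nat.cast_add, add_comm]
  rw [odd, even, add_comm, sum_range_even_add_sum_range_odd (fun l => f l), two_mul,
    sum_range_add, shift]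
  ring

end Parity

section SumZMod

variable {A : Type*} [AddCommMonoid A] {M : ℕ} [NeZero M]

lemma sum_range_natCast_eq_sum_zmod (g : ZMod M → A) : ∑ j ∈ range M, g j = ∑ x, g x :=
  sum_nbij' (fun j => (j : ZMod M)) ZMod.val (by simp) (by simp [ZMod.val_lt])
    (by simpa using fun j => ZMod.val_cast_of_lt) (by simp) (by simp)

lemma sum_comp_mul_add {a : ZMod M} (ha : IsUnit a) (b : ZMod M) (g : ZMod M → A) :
    ∑ x, g (a * x + b) = ∑ x, g x :=
  Function.Bijective.sum_comp (e := fun x => a * x + b)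
    ((AddGroup.addRight_bijective b).comp (IsUnit.isUnit_iff_mulLeft_bijective.mp ha)) g

end SumZMod

section FirstMoment

variable {R : Type*} [CommRing R] {M : ℕ}

/-- The first moment `∑ j g(j)` of a function on `ZMod M`, taken over the representatives
`0 ≤ j < M`. -/
def firstMoment (g : ZMod M → R) : R := ∑ j ∈ range M, (j : R) * g j

lemma firstMoment_const_mul (r : R) (g : ZMod M → R) :
    firstMoment (fun x => r * g x) = r * firstMoment g := by
  simp only [firstMoment, mul_sum, mul_left_comm]

lemma firstMoment_comp_neg_one_sub [NeZero M] {g : ZMod M → R} (hg : ∑ x, g x = 0) :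
    firstMoment (fun x => g (-1 - x)) = -firstMoment g := by
  have reflect : firstMoment (fun x => g (-1 - x)) =
      ∑ j ∈ range M, (((M : R) - 1) * g j - j * g j) := by
    rw [firstMoment, ← sum_range_reflect]
    refine sum_congr rfl fun j hj => ?_
    have hjM : j + 1 ≤ M := mem_range.mp hj
    rw [Nat.sub_sub, add_comm 1 j, Nat.cast_sub hjM, Nat.cast_sub hjM]
    simp only [Nat.cast_add, Nat.cast_one, CharP.cast_eq_zero, zero_sub, neg_add_rev,
      sub_add_cancel_left, neg_neg]
    ring
  rw [reflect, sum_sub_distrib, ← mul_sum, sum_range_natCast_eq_sum_zmod, hg, mul_zero, zero_sub,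
    firstMoment]

-- Sum `⌊l / 2⌋ g(l)` over `l < 2 * M`, and use `⌊l / 2⌋ + ⌊(l + M) / 2⌋ = l + ⌊M / 2⌋` for odd `M`.
lemma firstMoment_even_add_firstMoment_odd [NeZero M] (hM : Odd M) {g : ZMod M → R}
    (hg : ∑ x, g x = 0) :
    firstMoment (fun x => g (2 * x)) + firstMoment (fun x => g (2 * x + 1)) = firstMoment g := by
  have parity := sum_range_even_add_sum_range_odd (fun l => ((l / 2 : ℕ) : R) * g l) M
  have halves (l : ℕ) : (((l / 2 : ℕ) : R) + ((M + l) / 2 : ℕ)) = l + (M / 2 : ℕ) := by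
    norm_cast
    congr 1
    obtain ⟨n, rfl⟩ := hM
    omega
  have fold : ∑ l ∈ range (2 * M), ((l / 2 : ℕ) : R) * g l = firstMoment g := by
    rw [two_mul, sum_range_add, ← sum_add_distrib]
    simp only [Nat.cast_add, CharP.cast_eq_zero, zero_add]
    simp only [← add_mul, halves]
    simp only [add_mul, sum_add_distrib, ← mul_sum, sum_range_natCast_eq_sum_zmod, hg, mul_zero,
      add_zero, firstMoment]
  rw [fold] at parity
  rw [← parity, firstMoment, firstMoment]
  congr 1 <;> refine sum_congr rfl fun j _ => ?_
  · simp
  · rw [show (2 * j + 1) / 2 = j by omega]; simp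

end FirstMoment

section FirstMomentCharacter

variable {R : Type*} [CommRing R] {M : ℕ}

lemma firstMoment_char_six_mul_add_two (χ : DirichletCharacter R M) :
    firstMoment (fun x => χ (6 * x + 2)) = χ 2 * firstMoment (fun x => χ (3 * x + 1)) := by
  simp only [← firstMoment_const_mul, ← map_mul]
  ring_nf

lemma firstMoment_char_six_mul_add_one [IsDomain R] (hM : Odd M) (h3 : ¬ 3 ∣ M)
    {χ : DirichletCharacter R M} (hχ : χ ≠ 1) :
    firstMoment (fun x => χ (6 * x + 1)) =
      (1 + χ (-1) * χ 2) * firstMoment (fun x => χ (3 * x + 1)) := by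
  have : NeZero M := ⟨hM.pos.ne'⟩
  have unit3 : IsUnit (3 : ZMod M) :=
    (ZMod.isUnit_iff_coprime 3 M).mpr ((Nat.Prime.coprime_iff_not_dvd Nat.prime_three).mpr h3)
  have sum_zero : ∑ x, χ (3 * x + 1) = 0 := by
    rw [sum_comp_mul_add unit3 1 χ, MulChar.sum_eq_zero_of_ne_one hχ]
  have reflect : firstMoment (fun x => χ (3 * x + 2)) =
      -χ (-1) * firstMoment (fun x => χ (3 * x + 1)) := by
    rw [neg_mul, ← mul_neg, ← firstMoment_comp_neg_one_sub sum_zero, ← firstMoment_const_mul]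
    simp only [← map_mul]
    ring_nf
  have odd : firstMoment (fun x => χ (3 * (2 * x + 1) + 1)) =
      χ 2 * firstMoment (fun x => χ (3 * x + 2)) := by
    simp only [← firstMoment_const_mul, ← map_mul]
    ring_nf
  have even :
      firstMoment (fun x => χ (3 * (2 * x) + 1)) = firstMoment (fun x => χ (6 * x + 1)) := by
    ring_nf
  have parity := firstMoment_even_add_firstMoment_odd hM sum_zero
  linear_combination parity - even - odd - χ 2 * reflect

end FirstMomentCharacter

section TwistedSum

/-- The character sum `∑ z^l χ(l)` over `0 ≤ l < M`, a Gauss sum when `z` is an `M`-th root of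
unity. -/
def twistedSum {R : Type*} [CommRing R] {M : ℕ} (χ : DirichletCharacter R M) (z : R) : R :=
  ∑ l ∈ range M, z ^ l * χ l

variable {K : Type*} [Field K] {M N : ℕ} (χ : DirichletCharacter K M)

lemma pow_mul_twistedSum_inv (hM : M ≠ 1) {z : K} (hz : z ≠ 0) :
    z ^ M * twistedSum χ z⁻¹ = χ (-1) * twistedSum χ z := by
  obtain _ | m := M
  · simp [twistedSum]
  have drop_zero (w : K) : twistedSum χ w = ∑ l ∈ range m, w ^ (l + 1) * χ ((l + 1 : ℕ)) := by
    rw [twistedSum, sum_range_succ']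
    simp [χ.map_zero' hM]
  rw [drop_zero, drop_zero, ← sum_range_reflect, mul_sum, mul_sum]
  refine sum_congr rfl fun l hl => ?_
  have hlm : l + 1 ≤ m := mem_range.mp hl
  have index : m - 1 - l + 1 + (l + 1) = m + 1 := by omega
  have char_eq : χ ((m - 1 - l + 1 : ℕ)) = χ (-1) * χ ((l + 1 : ℕ)) := by
    rw [← map_mul]
    congr 1
    have := congrArg (Nat.cast (R := ZMod (m + 1))) index
    rw [Nat.cast_add, ZMod.natCast_self] at this
    linear_combination this
  have pow_split : z ^ (m + 1) = z ^ (m - 1 - l + 1) * z ^ (l + 1) := by rw [← pow_add, index]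
  rw [char_eq, pow_split, inv_pow]
  field_simp

lemma pow_mul_char_two_mul_sum_Icc_add_twistedSum_sq (hMN : M + 1 = 2 * N) {z : K} (hz : z ≠ 0) :
    z ^ M * (χ 2 * ∑ k ∈ Icc (1 - (N : ℤ)) (N - 1), (z ^ 2) ^ k * χ k) +
      χ 2 * twistedSum χ (z ^ 2) = (1 + z ^ M) * twistedSum χ z := by
  have quasi_periodic (k : ℤ) : z ^ (k + M) * χ ((k + M : ℤ)) = z ^ M * (z ^ k * χ k) := by
    rw [zpow_add₀ hz, zpow_natCast]
    push_cast
    rw [ZMod.natCast_self, add_zero]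
    ring
  have even (k : ℤ) : z ^ (2 * k) * χ ((2 * k : ℤ)) = χ 2 * ((z ^ 2) ^ k * χ k) := by
    rw [zpow_mul, Int.cast_mul, map_mul]
    norm_cast
    ring
  have parity := sum_Icc_even_add_sum_range_even (f := fun k => z ^ k * χ k) hMN quasi_periodic
  simp only [even, ← mul_sum] at parity
  simpa only [twistedSum, zpow_natCast, Int.cast_natCast] using parity

lemma char_two_mul_sum_Icc (hMN : M + 1 = 2 * N) (hM : M ≠ 1) (h3 : ¬ 3 ∣ M) {ε : K}
    (hε : IsPrimitiveRoot ε 3) :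
    χ 2 * ∑ k ∈ Icc (1 - (N : ℤ)) (N - 1), ε ^ (2 * (M : ℤ) * k + 2) * χ k =
      -(1 + χ (-1) * χ 2) * twistedSum χ (ε ^ M) := by
  have ε_ne_zero : ε ≠ 0 := hε.ne_zero (by norm_num)
  have geom : 1 + ε + ε ^ 2 = 0 := by
    simpa [sum_range_succ] using hε.geom_sum_eq_zero (by norm_num)
  have pow_M : (ε ^ M) ^ M = ε := by
    have : M * M % 3 = 1 := by
      have : M % 3 = 1 ∨ M % 3 = 2 := by omega
      rcases this with h | h <;> simp [Nat.mul_mod, h]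
    rw [← pow_mul, pow_eq_pow_mod _ hε.pow_eq_one, this, pow_one]
  have sq_eq_inv : (ε ^ M) ^ 2 = (ε ^ M)⁻¹ := by
    apply eq_inv_of_mul_eq_one_left
    rw [← pow_succ, pow_right_comm, hε.pow_eq_one, one_pow]
  have factor : ∑ k ∈ Icc (1 - (N : ℤ)) (N - 1), ε ^ (2 * (M : ℤ) * k + 2) * χ k =
      ε ^ 2 * ∑ k ∈ Icc (1 - (N : ℤ)) (N - 1), ((ε ^ M) ^ 2) ^ k * χ k := by
    rw [mul_sum]
    refine sum_congr rfl fun k _ => ?_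
    rw [zpow_add₀ ε_ne_zero, zpow_mul, mul_comm 2 (M : ℤ), zpow_mul]
    norm_cast
    ring
  have parity := pow_mul_char_two_mul_sum_Icc_add_twistedSum_sq χ hMN (pow_ne_zero M ε_ne_zero)
  have reflect := pow_mul_twistedSum_inv χ hM (pow_ne_zero M ε_ne_zero)
  rw [pow_M] at parity reflect
  rw [sq_eq_inv] at parity factor
  rw [factor]
  linear_combination ε * parity - χ 2 * reflect + twistedSum χ (ε ^ M) * geom

end TwistedSum

theorem character_sum_identity_general {K : Type*} [Field K]
    (N : ℕ) (hN : 1 < N) (h3 : ¬ (3 ∣ (2 * N - 1)))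
    (χ : DirichletCharacter K (2 * N - 1)) (hχ : χ ≠ 1) (ε : K) (hε : IsPrimitiveRoot ε 3) :
    (∑ j ∈ Finset.range (2 * N - 1), (j : K) * χ ((6 * j + 1 : ℕ) : ZMod (2 * N - 1))) *
      (∑ k ∈ Finset.Icc 1 (2 * N - 2), ε ^ ((2 * N - 1) * k) * χ ((k : ℕ) : ZMod (2 * N - 1))) =
    -(∑ j ∈ Finset.range (2 * N - 1), (j : K) * χ ((6 * j + 2 : ℕ) : ZMod (2 * N - 1))) *
      (∑ k ∈ Finset.Icc (1 - (N : ℤ)) ((N : ℤ) - 1),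
        ε ^ (2 * (2 * (N : ℤ) - 1) * k + 2) * χ ((k : ℤ) : ZMod (2 * N - 1))) := by
  have cast_modulus : 2 * (N : ℤ) - 1 = (2 * N - 1 : ℕ) := by omega
  have range_eq : range (2 * N - 1) = insert 0 (Icc 1 (2 * N - 2)) := by
    ext k; simp only [mem_range, mem_insert, mem_Icc]; omega
  have first_sum : ∑ k ∈ Icc 1 (2 * N - 2), ε ^ ((2 * N - 1) * k) * χ (k : ZMod (2 * N - 1)) =
      twistedSum χ (ε ^ (2 * N - 1)) := by
    rw [twistedSum, range_eq, sum_insert (by simp)]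
    simp [χ.map_zero' (by omega), pow_mul]
  have moment_one := firstMoment_char_six_mul_add_one ⟨N - 1, by omega⟩ h3 hχ
  have moment_two := firstMoment_char_six_mul_add_two χ
  have second_sum := char_two_mul_sum_Icc χ (N := N) (by omega) (by omega) h3 hε
  rw [first_sum, cast_modulus]
  simp only [firstMoment] at moment_one moment_two
  push_cast
  rw [moment_one, moment_two]
  linear_combination
    (∑ j ∈ range (2 * N - 1), (j : K) * χ (3 * (j : ZMod (2 * N - 1)) + 1)) * second_sum

theorem character_sum_identity
    (N : ℕ) (hN : 1 < N) (h3 : ¬ (3 ∣ (2 * N - 1)))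
    (χ : DirichletCharacter ℂ (2 * N - 1)) (hχ : χ ≠ 1)
    (ε : ℂ) (hε : ε = Complex.exp (2 * Real.pi * Complex.I / 3)) :
    (∑ j ∈ Finset.range (2 * N - 1), (j : ℂ) * χ ((6 * j + 1 : ℕ) : ZMod (2 * N - 1))) *
      (∑ k ∈ Finset.Icc 1 (2 * N - 2), ε ^ ((2 * N - 1) * k) * χ ((k : ℕ) : ZMod (2 * N - 1))) =
    -(∑ j ∈ Finset.range (2 * N - 1), (j : ℂ) * χ ((6 * j + 2 : ℕ) : ZMod (2 * N - 1))) *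
      (∑ k ∈ Finset.Icc (1 - (N : ℤ)) ((N : ℤ) - 1),
        ε ^ (2 * (2 * (N : ℤ) - 1) * k + 2) * χ ((k : ℤ) : ZMod (2 * N - 1))) :=
  character_sum_identity_general N hN h3 χ hχ ε <|
    hε ▸ mod_cast Complex.isPrimitiveRoot_exp 3 (by norm_num)
end
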